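/- For every integer x ≥ 1 there exists a simple outer 5-planar graph on n = 10x + 2 vertices with at least 37x + 1 = 3.7n − 6.4 edges. That is, there exist outer 5-planar graphs with n vertices and 3.7n − 6.4 edges. -/

import Mathlib

/-- `x` lies strictly between `a` and `b` in the cyclic order of `Fin n`
(going forward from `a` to `b` along the cycle). -/
def cycBtw (n : ℕ) (a b x : Fin n) : Prop :=
  0 < (x.val + n - a.val) % n ∧ (x.val + n - a.val) % n < (b.val + n - a.val) % n

/-- Two edges `e` and `f` cross in the cyclic order determined by the positions `σ`:
they have four distinct endpoints and the endpoints interleave, i.e. exactly one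
endpoint of `f` lies strictly between the endpoints of `e`. -/
def crossing (n : ℕ) (σ : Fin n → Fin n) (e f : Sym2 (Fin n)) : Prop :=
  ∃ a b c d : Fin n, e = s(a, b) ∧ f = s(c, d) ∧
    a ≠ b ∧ c ≠ d ∧ a ≠ c ∧ a ≠ d ∧ b ≠ c ∧ b ≠ d ∧
    (cycBtw n (σ a) (σ b) (σ c) ↔ ¬ cycBtw n (σ a) (σ b) (σ d))

/-- With respect to the cyclic order given by positions `σ`, every edge of `G`
is crossed by at most `k` other edges. -/
def OuterKPlanarOrd (n k : ℕ) (σ : Fin n → Fin n) (G : SimpleGraph (Fin n)) : Prop :=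
  ∀ e ∈ G.edgeSet, ({f ∈ G.edgeSet | crossing n σ e f}).ncard ≤ k

/-- `G` is outer `k`-planar: its vertices can be arranged in a cyclic order such
that every edge is crossed by at most `k` other edges. -/
def IsOuterKPlanar (n k : ℕ) (G : SimpleGraph (Fin n)) : Prop :=
  ∃ σ : Fin n ≃ Fin n, OuterKPlanarOrd n k (⇑σ) G

/-- The 38 edges of an outer 5-planar graph on the convex 12-gon with corners `0, …, 11`,
each listed with its smaller endpoint first. -/
def blockEdges : Finset (ℕ × ℕ) :=
  {(0, 1), (1, 2), (2, 3), (3, 4), (4, 5), (5, 6), (6, 7), (7, 8), (8, 9), (9, 10), (10, 11),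
    (0, 11), (0, 2), (0, 3), (0, 4), (0, 5), (1, 3), (1, 4), (1, 11), (2, 4), (2, 11), (3, 5),
    (3, 11), (4, 10), (4, 11), (5, 7), (5, 8), (5, 9), (5, 10), (5, 11), (6, 8), (6, 9), (6, 10),
    (6, 11), (7, 9), (7, 10), (8, 10), (9, 11)}

/-- Interleaving of two chords, given by their endpoints in increasing order. -/
def Interleave (p q : ℕ × ℕ) : Prop :=
  (p.1 < q.1 ∧ q.1 < p.2 ∧ p.2 < q.2) ∨ (q.1 < p.1 ∧ p.1 < q.2 ∧ q.2 < p.2)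

instance (p q : ℕ × ℕ) : Decidable (Interleave p q) := by
  unfold Interleave; infer_instance

theorem blockEdges_bounds : ∀ p ∈ blockEdges, p.1 < p.2 ∧ p.2 ≤ 11 := by decide

theorem card_filter_interleave_le :
    ∀ p ∈ blockEdges, (blockEdges.filter (Interleave p)).card ≤ 5 := by decide

/-- The global position of corner `j` of the `i`-th block: all blocks share corner `0`, and
consecutive blocks are glued along the edge from `0` to `10 * i + 11`. -/
def blockVertex (i j : ℕ) : ℕ := if j = 0 then 0 else 10 * i + j

/-- The global edge of the `i`-th block coming from the pair `p` of corners. -/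
def blockPair (i : ℕ) (p : ℕ × ℕ) : ℕ × ℕ := (blockVertex i p.1, blockVertex i p.2)

theorem Interleave.of_blockPair {i j : ℕ} {p q : ℕ × ℕ} (hp : p ∈ blockEdges)
    (hq : q ∈ blockEdges) (h : Interleave (blockPair i p) (blockPair j q)) :
    i = j ∧ Interleave p q := by
  have hp := blockEdges_bounds p hp
  have hq := blockEdges_bounds q hq
  unfold Interleave blockPair blockVertex at *
  dsimp only at h
  split_ifs at h <;> omega

theorem cycBtw_iff {n : ℕ} {a b x : Fin n} (hab : a < b) : cycBtw n a b x ↔ a < x ∧ x < b := by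
  have hb : (b.val + n - a.val) % n = b.val - a.val := by
    rw [show b.val + n - a.val = (b.val - a.val) + n by omega, Nat.add_mod_right,
      Nat.mod_eq_of_lt (by omega)]
  rw [cycBtw, hb]
  rcases le_or_gt a x with h | h
  · rw [show x.val + n - a.val = (x.val - a.val) + n by omega, Nat.add_mod_right,
      Nat.mod_eq_of_lt (by omega)]
    omega
  · rw [Nat.mod_eq_of_lt (by omega)]
    omega

theorem cycBtw_swap_iff {n : ℕ} {a b x : Fin n} (hab : a < b) :
    cycBtw n b a x ↔ x < a ∨ b < x := by
  have ha : (a.val + n - b.val) % n = a.val + n - b.val := Nat.mod_eq_of_lt (by omega)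
  rw [cycBtw, ha]
  rcases le_or_gt b x with h | h
  · rw [show x.val + n - b.val = (x.val - b.val) + n by omega, Nat.add_mod_right,
      Nat.mod_eq_of_lt (by omega)]
    omega
  · rw [Nat.mod_eq_of_lt (by omega)]
    omega

theorem interleave_of_crossing {n : ℕ} {a b c d : Fin n} (hab : a < b) (hcd : c < d)
    (h : crossing n id s(a, b) s(c, d)) :
    Interleave (a.val, b.val) (c.val, d.val) := by
  obtain ⟨a', b', c', d', he, hf, -, -, h1, h2, h3, h4, h⟩ := h
  simp only [id] at h
  rw [Sym2.eq_iff] at he hf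
  unfold Interleave
  dsimp only
  rcases he with ⟨rfl, rfl⟩ | ⟨rfl, rfl⟩ <;> rcases hf with ⟨rfl, rfl⟩ | ⟨rfl, rfl⟩ <;>
    first
      | rw [cycBtw_iff hab, cycBtw_iff hab] at h
        omega
      | rw [cycBtw_swap_iff hab, cycBtw_swap_iff hab] at h
        omega

/-- The edge on `Fin (10 * x + 2)` coming from the pair `p` of corners of the `i`-th block. -/
def blockSym (x i : ℕ) (p : ℕ × ℕ) : Sym2 (Fin (10 * x + 2)) :=
  s(Fin.ofNat _ (blockPair i p).1, Fin.ofNat _ (blockPair i p).2)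

theorem val_ofNat_blockPair {x i : ℕ} {p : ℕ × ℕ} (hi : i < x) (hp : p ∈ blockEdges) :
    (Fin.ofNat (10 * x + 2) (blockPair i p).1).val = (blockPair i p).1 ∧
      (Fin.ofNat (10 * x + 2) (blockPair i p).2).val = (blockPair i p).2 ∧
      (blockPair i p).1 < (blockPair i p).2 := by
  have hb := blockEdges_bounds p hp
  simp only [Fin.val_ofNat, blockPair, blockVertex]
  refine ⟨Nat.mod_eq_of_lt ?_, Nat.mod_eq_of_lt ?_, ?_⟩ <;> split_ifs <;> omega

theorem ofNat_blockPair_lt {x i : ℕ} {p : ℕ × ℕ} (hi : i < x) (hp : p ∈ blockEdges) :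
    Fin.ofNat (10 * x + 2) (blockPair i p).1 < Fin.ofNat (10 * x + 2) (blockPair i p).2 := by
  obtain ⟨h1, h2, h3⟩ := val_ofNat_blockPair hi hp
  rw [Fin.lt_def, h1, h2]
  exact h3

/-- The graph obtained by gluing `x` blocks. -/
def blockGraph (x : ℕ) : SimpleGraph (Fin (10 * x + 2)) :=
  SimpleGraph.fromEdgeSet {e | ∃ i < x, ∃ p ∈ blockEdges, e = blockSym x i p}

theorem mem_edgeSet_blockGraph {x : ℕ} {e : Sym2 (Fin (10 * x + 2))} :
    e ∈ (blockGraph x).edgeSet ↔ ∃ i < x, ∃ p ∈ blockEdges, e = blockSym x i p := by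
  rw [blockGraph, SimpleGraph.edgeSet_fromEdgeSet]
  refine ⟨fun h => h.1, fun h => ⟨h, ?_⟩⟩
  obtain ⟨i, hi, p, hp, rfl⟩ := h
  exact fun h => (ofNat_blockPair_lt hi hp).ne h

theorem eq_and_interleave_of_crossing_blockSym {x i j : ℕ} {p q : ℕ × ℕ} (hi : i < x) (hj : j < x)
    (hp : p ∈ blockEdges) (hq : q ∈ blockEdges)
    (h : crossing (10 * x + 2) id (blockSym x i p) (blockSym x j q)) :
    i = j ∧ Interleave p q := by
  have h := interleave_of_crossing (ofNat_blockPair_lt hi hp) (ofNat_blockPair_lt hj hq) h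
  rw [(val_ofNat_blockPair hi hp).1, (val_ofNat_blockPair hi hp).2.1,
    (val_ofNat_blockPair hj hq).1, (val_ofNat_blockPair hj hq).2.1] at h
  exact h.of_blockPair hp hq

theorem blockGraph_isOuterKPlanar (x : ℕ) : IsOuterKPlanar (10 * x + 2) 5 (blockGraph x) := by
  refine ⟨Equiv.refl _, fun e he => ?_⟩
  obtain ⟨i, hi, p, hp, rfl⟩ := mem_edgeSet_blockGraph.1 he
  have hsub : {f ∈ (blockGraph x).edgeSet | crossing (10 * x + 2) id (blockSym x i p) f} ⊆
      ((blockEdges.filter (Interleave p)).image (blockSym x i) : Finset _) := by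
    rintro f ⟨hf, hc⟩
    obtain ⟨j, hj, q, hq, rfl⟩ := mem_edgeSet_blockGraph.1 hf
    obtain ⟨rfl, hpq⟩ := eq_and_interleave_of_crossing_blockSym hi hj hp hq hc
    exact Finset.mem_coe.2 (Finset.mem_image_of_mem _ (Finset.mem_filter.2 ⟨hq, hpq⟩))
  calc _ ≤ _ := Set.ncard_le_ncard hsub (Finset.finite_toSet _)
    _ ≤ 5 := by
      rw [Set.ncard_coe_finset]
      exact Finset.card_image_le.trans (card_filter_interleave_le p hp)

theorem blockPair_eq_of_blockSym_eq {x i j : ℕ} {p q : ℕ × ℕ} (hi : i < x) (hj : j < x)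
    (hp : p ∈ blockEdges) (hq : q ∈ blockEdges) (h : blockSym x i p = blockSym x j q) :
    blockPair i p = blockPair j q := by
  have hp' := val_ofNat_blockPair hi hp
  have hq' := val_ofNat_blockPair hj hq
  rw [blockSym, blockSym, Sym2.eq_iff, Fin.ext_iff, Fin.ext_iff, Fin.ext_iff, Fin.ext_iff,
    hp'.1, hp'.2.1, hq'.1, hq'.2.1] at h
  ext <;> omega

theorem le_ncard_edgeSet_blockGraph {x : ℕ} (hx : 1 ≤ x) :
    37 * x + 1 ≤ (blockGraph x).edgeSet.ncard := by
  let K : Finset (ℕ × ℕ × ℕ) := insert (0, (0, 1)) (Finset.range x ×ˢ blockEdges.erase (0, 1))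
  have hK : ∀ k ∈ K, k.1 < x ∧ k.2 ∈ blockEdges ∧ (k.2 = (0, 1) → k.1 = 0) := by
    intro k hk
    rcases Finset.mem_insert.1 hk with rfl | hk
    · exact ⟨hx, by decide, fun _ => rfl⟩
    · obtain ⟨h1, h2⟩ := Finset.mem_product.1 hk
      obtain ⟨h2, h3⟩ := Finset.mem_erase.1 h2
      exact ⟨Finset.mem_range.1 h1, h3, fun h => absurd h h2⟩
  have hcard : K.card = 37 * x + 1 := by
    rw [Finset.card_insert_of_notMem (by simp), Finset.card_product, Finset.card_range,
      show (blockEdges.erase (0, 1)).card = 37 by decide, mul_comm]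
  have hinj : Set.InjOn (fun k : ℕ × ℕ × ℕ => blockSym x k.1 k.2) K := by
    rintro ⟨i, a, b⟩ hk ⟨j, c, d⟩ hl h
    obtain ⟨hi, hp, hp0⟩ := hK _ hk
    obtain ⟨hj, hq, hq0⟩ := hK _ hl
    have h := blockPair_eq_of_blockSym_eq hi hj hp hq h
    have hb := blockEdges_bounds _ hp
    have hd := blockEdges_bounds _ hq
    simp only [blockPair, blockVertex, Prod.mk.injEq] at *
    split_ifs at h <;> omega
  rw [← hcard, ← Finset.card_image_of_injOn hinj, ← Set.ncard_coe_finset]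
  refine Set.ncard_le_ncard (fun e he => ?_) (Set.toFinite _)
  obtain ⟨k, hk, rfl⟩ := Finset.mem_image.1 (Finset.mem_coe.1 he)
  obtain ⟨hi, hp, -⟩ := hK k hk
  exact mem_edgeSet_blockGraph.2 ⟨_, hi, _, hp, rfl⟩

/-- For every `x ≥ 1` there exists an outer `5`-planar graph on `n = 10x + 2`
vertices with at least `37x + 1 = 3.7n - 6.4` edges. -/
theorem exists_dense_outer_five_planar (x : ℕ) (hx : 1 ≤ x) :
    ∃ G : SimpleGraph (Fin (10 * x + 2)), IsOuterKPlanar (10 * x + 2) 5 G ∧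
      37 * x + 1 ≤ G.edgeSet.ncard :=
  ⟨blockGraph x, blockGraph_isOuterKPlanar x, le_ncard_edgeSet_blockGraph hx⟩
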